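/- Let (E₀,E₁) and (F₀,F₁) be Banach couples both satisfying the Approximation Hypothesis (AP), let ρ be a function parameter of class ℬ^{+−}, γ(t) = 1/ρ̄(t⁻¹), and let G be a Banach space. If T is a bounded bilinear operator from (E₀+E₁)×(F₀+F₁) into G which is compact from E₀×F₀ into G, then for all 1 ≤ p,q ≤ ∞, T is compact from (E₀,E₁)_{γ,p;J} × (F₀,F₁)_{ρ,q;J} into G. -/

import Mathlib

open Filter Set MeasureTheory ENNReal NNReal

noncomputable section

/-! ### Function parameters -/

/-- `rbar ρ s = sup_{t>0} ρ(s t)/ρ(t)`. -/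
def rbar (ρ : ℝ → ℝ) (s : ℝ) : ℝ := sSup {r : ℝ | ∃ t > 0, r = ρ (s * t) / ρ t}

/-- The class `ℬ` of function parameters. -/
structure IsClassB (ρ : ℝ → ℝ) : Prop where
  pos : ∀ t > 0, 0 < ρ t
  cont : ContinuousOn ρ (Set.Ioi 0)
  one : ρ 1 = 1
  bdd : ∀ s > 0, BddAbove {r : ℝ | ∃ t > 0, r = ρ (s * t) / ρ t}

/-- The class `ℬ^{+-}` of function parameters. -/
structure IsClassBpm (ρ : ℝ → ℝ) extends IsClassB ρ : Prop where
  integ : MeasureTheory.IntegrableOn (fun t => min 1 t⁻¹ * rbar ρ t * t⁻¹) (Set.Ioi 0)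

/-- Pseudo-concavity of a function parameter. -/
def IsPseudoConcave (ρ : ℝ → ℝ) : Prop :=
  ∃ C > 0, ∀ s > 0, ∀ t > 0, ρ t ≤ C * max 1 (t / s) * ρ s

/-! ### `ℓ^q` norms of two-sided sequences with values in `ℝ≥0∞` -/

/-- The `ℓ^q(ℤ)` norm of a sequence of extended reals. -/
def eLq (q : ℝ≥0∞) (a : ℤ → ℝ≥0∞) : ℝ≥0∞ :=
  if q = ∞ then ⨆ n, a n else (∑' n, a n ^ q.toReal) ^ (1 / q.toReal)

/-! ### Extended-real-valued norms -/

/-- `N : V → ℝ≥0∞` is a complete (Banach) extended norm; its finiteness set is the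
underlying Banach space. -/
structure IsENorm {V : Type*} [AddCommGroup V] [Module ℝ V] (N : V → ℝ≥0∞) : Prop where
  map_zero : N 0 = 0
  eq_zero : ∀ x, N x = 0 → x = 0
  add_le : ∀ x y, N (x + y) ≤ N x + N y
  smul : ∀ (c : ℝ) (x : V), N (c • x) = ENNReal.ofReal |c| * N x
  complete : ∀ u : ℕ → V, (∀ n, N (u n) ≠ ∞) →
    (∀ ε : ℝ, 0 < ε → ∃ n₀ : ℕ, ∀ m ≥ n₀, ∀ n ≥ n₀, N (u m - u n) < ENNReal.ofReal ε) →
    ∃ x, N x ≠ ∞ ∧ Filter.Tendsto (fun n => N (u n - x)) Filter.atTop (nhds 0)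

/-! ### Banach couples realized inside an ambient space -/

section Couple

variable {E₀ E₁ V : Type*} [NormedAddCommGroup E₀] [NormedSpace ℝ E₀]
  [NormedAddCommGroup E₁] [NormedSpace ℝ E₁] [AddCommGroup V] [Module ℝ V]

/-- The extended norm on the ambient space induced by the embedding of one Banach space:
`∞` outside the range of the embedding. -/
def enormOf {E : Type*} [NormedAddCommGroup E] [NormedSpace ℝ E] (i : E →ₗ[ℝ] V) (x : V) : ℝ≥0∞ :=
  ⨅ (a : E) (_ : i a = x), (‖a‖₊ : ℝ≥0∞)

/-- The `K`-functional of the couple `(E₀, E₁)`. -/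
def eKfun (i₀ : E₀ →ₗ[ℝ] V) (i₁ : E₁ →ₗ[ℝ] V) (t : ℝ) (x : V) : ℝ≥0∞ :=
  ⨅ (a : E₀) (b : E₁) (_ : x = i₀ a + i₁ b), ENNReal.ofReal (‖a‖ + t * ‖b‖)

/-- The extended norm of `E₀ + E₁`. -/
def esumNorm (i₀ : E₀ →ₗ[ℝ] V) (i₁ : E₁ →ₗ[ℝ] V) (x : V) : ℝ≥0∞ := eKfun i₀ i₁ 1 x

/-- The extended norm of `E₀ ∩ E₁`. -/
def einterNorm (i₀ : E₀ →ₗ[ℝ] V) (i₁ : E₁ →ₗ[ℝ] V) (x : V) : ℝ≥0∞ :=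
  max (enormOf i₀ x) (enormOf i₁ x)

/-- The extended norm of the interpolation space `(E₀,E₁)_{ρ,q;K}`. -/
def eKNorm (i₀ : E₀ →ₗ[ℝ] V) (i₁ : E₁ →ₗ[ℝ] V) (ρ : ℝ → ℝ) (q : ℝ≥0∞) (x : V) : ℝ≥0∞ :=
  eLq q (fun n => eKfun i₀ i₁ ((2 : ℝ) ^ n) x / ENNReal.ofReal (ρ ((2 : ℝ) ^ n)))

/-- `(a, b)` is a `J`-representation of `x`: `u_n = a n = b n ∈ E₀ ∩ E₁` and
`x = ∑_{n ∈ ℤ} u_n` with convergence in `E₀ + E₁`. -/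
def IsJRep (i₀ : E₀ →ₗ[ℝ] V) (i₁ : E₁ →ₗ[ℝ] V) (x : V) (a : ℤ → E₀) (b : ℤ → E₁) : Prop :=
  (∀ n, i₀ (a n) = i₁ (b n)) ∧
  ∀ ε : ℝ, 0 < ε → ∃ F : Finset ℤ, ∀ G : Finset ℤ, F ⊆ G →
    esumNorm i₀ i₁ (x - ∑ n ∈ G, i₀ (a n)) < ENNReal.ofReal ε

/-- The extended norm of the interpolation space `(E₀,E₁)_{ρ,q;J}`. -/
def eJNorm (i₀ : E₀ →ₗ[ℝ] V) (i₁ : E₁ →ₗ[ℝ] V) (ρ : ℝ → ℝ) (q : ℝ≥0∞) (x : V) : ℝ≥0∞ :=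
  ⨅ (a : ℤ → E₀) (b : ℤ → E₁) (_ : IsJRep i₀ i₁ x a b),
    eLq q (fun n => ENNReal.ofReal (max ‖a n‖ ((2 : ℝ) ^ n * ‖b n‖) / ρ ((2 : ℝ) ^ n)))

/-- `(E₀, E₁)` is a Banach couple: both spaces are complete and continuously embedded
in the Hausdorff topological vector space `V`. -/
structure IsBanachCouple [TopologicalSpace V] (i₀ : E₀ →ₗ[ℝ] V) (i₁ : E₁ →ₗ[ℝ] V) : Prop where
  t2 : T2Space V
  contAdd : ContinuousAdd V
  contSMul : ContinuousSMul ℝ V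
  complete₀ : CompleteSpace E₀
  complete₁ : CompleteSpace E₁
  inj₀ : Function.Injective i₀
  inj₁ : Function.Injective i₁
  cont₀ : Continuous i₀
  cont₁ : Continuous i₁

/-- `N` is (the extended norm of) an intermediate space for the couple `(E₀, E₁)`. -/
def IsIntermediate (i₀ : E₀ →ₗ[ℝ] V) (i₁ : E₁ →ₗ[ℝ] V) (N : V → ℝ≥0∞) : Prop :=
  IsENorm N ∧
  (∃ C > 0, ∀ x : V, N x ≤ ENNReal.ofReal C * einterNorm i₀ i₁ x) ∧
  (∃ C > 0, ∀ x : V, esumNorm i₀ i₁ x ≤ ENNReal.ofReal C * N x)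

/-- `N` is an intermediate space of class `J_ρ(E₀,E₁)`, i.e. `(E₀,E₁)_{ρ,1;J} ↪ N`. -/
def IsClassJ (i₀ : E₀ →ₗ[ℝ] V) (i₁ : E₁ →ₗ[ℝ] V) (ρ : ℝ → ℝ) (N : V → ℝ≥0∞) : Prop :=
  IsIntermediate i₀ i₁ N ∧ ∃ C > 0, ∀ x : V, N x ≤ ENNReal.ofReal C * eJNorm i₀ i₁ ρ 1 x

/-- `N` is an intermediate space of class `K_ρ(E₀,E₁)`, i.e. `N ↪ (E₀,E₁)_{ρ,∞;K}`. -/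
def IsClassK (i₀ : E₀ →ₗ[ℝ] V) (i₁ : E₁ →ₗ[ℝ] V) (ρ : ℝ → ℝ) (N : V → ℝ≥0∞) : Prop :=
  IsIntermediate i₀ i₁ N ∧ ∃ C > 0, ∀ x : V, eKNorm i₀ i₁ ρ ⊤ x ≤ ENNReal.ofReal C * N x

end Couple

/-! ### The approximation hypothesis (AP) -/

/-- The couple with extended norms `N₀, N₁` satisfies the approximation hypothesis (AP). -/
def SatisfiesAP {V : Type*} [AddCommGroup V] [Module ℝ V] (N₀ N₁ : V → ℝ≥0∞) : Prop :=
  ∃ (P Pp Pm : ℕ → V →ₗ[ℝ] V) (C : ℝ≥0∞) (c : ℕ → ℝ≥0∞),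
    0 < C ∧ C ≠ ∞ ∧ Filter.Tendsto c Filter.atTop (nhds 0) ∧
    (∀ (n : ℕ) (x y : V), N₀ x ≠ ∞ → N₁ y ≠ ∞ →
      (P n (x + y) + Pp n (x + y) + Pm n (x + y) = x + y ∧
        N₀ (P n (x + y)) ≠ ∞ ∧ N₁ (P n (x + y)) ≠ ∞)) ∧
    (∀ n x, N₀ (P n x) ≤ C * N₀ x) ∧ (∀ n x, N₁ (P n x) ≤ C * N₁ x) ∧
    (∀ n x, N₀ (Pp n x) ≤ C * N₀ x) ∧ (∀ n x, N₁ (Pp n x) ≤ C * N₁ x) ∧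
    (∀ n x, N₀ (Pm n x) ≤ C * N₀ x) ∧ (∀ n x, N₁ (Pm n x) ≤ C * N₁ x) ∧
    (∀ n x, N₀ x ≠ ∞ → N₁ (Pp n x) ≤ c n * N₀ x) ∧
    (∀ n x, N₁ x ≠ ∞ → N₀ (Pm n x) ≤ c n * N₁ x)

/-! ### Bilinear operators -/

section Bilinear

variable {VE VF VG : Type*} [AddCommGroup VG]

/-- The norm of a bilinear operator between spaces given by extended norms. -/
def eBilNorm (NE : VE → ℝ≥0∞) (NF : VF → ℝ≥0∞) (NG : VG → ℝ≥0∞) (T : VE → VF → VG) : ℝ≥0∞ :=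
  ⨆ (x : VE) (_ : NE x ≤ 1) (y : VF) (_ : NF y ≤ 1), NG (T x y)

/-- Boundedness of a bilinear operator between spaces given by extended norms. -/
def eBilBdd (NE : VE → ℝ≥0∞) (NF : VF → ℝ≥0∞) (NG : VG → ℝ≥0∞) (T : VE → VF → VG) : Prop :=
  ∃ M : ℝ≥0, ∀ x y, NG (T x y) ≤ (M : ℝ≥0∞) * NE x * NF y

/-- Compactness of a bilinear operator: the image of the product of unit balls is
totally bounded in the target. -/
def eBilCompact (NE : VE → ℝ≥0∞) (NF : VF → ℝ≥0∞) (NG : VG → ℝ≥0∞) (T : VE → VF → VG) : Prop :=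
  ∀ ε : ℝ, 0 < ε → ∃ D : Finset VG, ∀ x y, NE x ≤ 1 → NF y ≤ 1 →
    ∃ c ∈ D, NG (T x y - c) < ENNReal.ofReal ε

end Bilinear

/-! ### A generic K-functional for a couple given by two extended norms -/

/-- Generic `K`-functional for a couple described by two extended norms on `W`. -/
def eKgen {W : Type*} [AddCommGroup W] (N₀ N₁ : W → ℝ≥0∞) (t : ℝ) (x : W) : ℝ≥0∞ :=
  ⨅ y : W, (N₀ (x - y) + ENNReal.ofReal t * N₁ y)

/-- The `(ρ,q;K)`-interpolation extended norm for a couple given by two extended norms. -/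
def eKNormGen {W : Type*} [AddCommGroup W] (N₀ N₁ : W → ℝ≥0∞) (ρ : ℝ → ℝ) (q : ℝ≥0∞)
    (x : W) : ℝ≥0∞ :=
  eLq q (fun n => eKgen N₀ N₁ ((2 : ℝ) ^ n) x / ENNReal.ofReal (ρ ((2 : ℝ) ^ n)))

/-! ### Lions and Persson approximation conditions -/

section LP

variable {E₀ E₁ V : Type*} [NormedAddCommGroup E₀] [NormedSpace ℝ E₀]
  [NormedAddCommGroup E₁] [NormedSpace ℝ E₁] [AddCommGroup V] [Module ℝ V]

/-- Lions' approximation condition for the couple `(E₀, E₁)`. -/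
def LionsCondition (i₀ : E₀ →ₗ[ℝ] V) (i₁ : E₁ →ₗ[ℝ] V) : Prop :=
  ∃ P : ℕ → V →ₗ[ℝ] V,
    (∀ (n : ℕ) (a : E₀), einterNorm i₀ i₁ (P n (i₀ a)) ≠ ∞) ∧
    (∀ (n : ℕ) (b : E₁), einterNorm i₀ i₁ (P n (i₁ b)) ≠ ∞) ∧
    (∀ a : E₀, Filter.Tendsto (fun n => enormOf i₀ (P n (i₀ a) - i₀ a)) Filter.atTop (nhds 0)) ∧
    (∀ b : E₁, Filter.Tendsto (fun n => enormOf i₁ (P n (i₁ b) - i₁ b)) Filter.atTop (nhds 0))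

/-- Persson's approximation condition for the couple `(E₀, E₁)`. -/
def PerssonCondition (i₀ : E₀ →ₗ[ℝ] V) (i₁ : E₁ →ₗ[ℝ] V) : Prop :=
  ∀ K : Set E₀, IsCompact K →
    ∃ (C : ℝ) (P : Set (V →ₗ[ℝ] V)), 0 < C ∧
      (∀ p ∈ P,
        (∀ a : E₀, einterNorm i₀ i₁ (p (i₀ a)) ≠ ∞ ∧
          enormOf i₀ (p (i₀ a)) ≤ ENNReal.ofReal (C * ‖a‖)) ∧
        (∀ b : E₁, einterNorm i₀ i₁ (p (i₁ b)) ≠ ∞ ∧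
          enormOf i₁ (p (i₁ b)) ≤ ENNReal.ofReal (C * ‖b‖))) ∧
      (∀ ε > 0, ∃ p ∈ P, ∀ x ∈ K, enormOf i₀ (p (i₀ x) - i₀ x) < ENNReal.ofReal ε)

end LP

end

/-!
Let `x = ∑ uₖ` be a `J`-representation with `J(2ᵏ, uₖ) ≤ 2 w(2ᵏ)`. Then `uₖ` has norm at most
`2 min(1, 2⁻ᵏ) w(2ᵏ)` in `E₀ + E₁`, and these numbers are summable for `w = ρ` and for
`w = γ ≤ ρ̄`. A partial sum over a fixed finite set of indices therefore approximates `x` in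
`E₀ + E₁` uniformly over the unit ball of the `J`-space, while its `E₀`-norm is bounded over that
ball. Boundedness of `T` on the sums reduces total boundedness of the image to that of
`T(B_{E₀} × B_{F₀})`, up to dilation.
-/

/-! ### Sampling integrable functions along geometric progressions -/

lemma iUnion_Ioc_zpow {b : ℝ} (hb : 1 < b) : ⋃ k : ℤ, Ioc (b ^ k) (b ^ (k + 1)) = Ioi 0 := by
  ext t
  simp only [mem_iUnion, mem_Ioi]
  exact ⟨fun ⟨k, hk⟩ ↦ (zpow_pos (zero_lt_one.trans hb) k).trans hk.1,
    fun ht ↦ exists_mem_Ioc_zpow ht hb⟩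

lemma setLIntegral_Ioc_mul_left {c : ℝ} (hc : 0 < c) (a b : ℝ) (f : ℝ → ℝ≥0∞) :
    ∫⁻ t in Ioc (c * a) (c * b), f t = ∫⁻ s in Ioc a b, ENNReal.ofReal c * f (c * s) := by
  have hderiv (s : ℝ) (_ : s ∈ Ioc a b) : HasDerivWithinAt (fun s ↦ c * s) c (Ioc a b) s := by
    simpa using ((hasDerivAt_id s).const_mul c).hasDerivWithinAt
  rw [← image_mul_left_Ioc hc, lintegral_image_eq_lintegral_abs_deriv_mul measurableSet_Ioc hderiv
    (mul_right_injective₀ hc.ne').injOn, abs_of_pos hc]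

lemma tsum_setLIntegral_Ioc_zpow {b : ℝ} (hb : 1 < b) (f : ℝ → ℝ≥0∞) :
    ∑' k : ℤ, ∫⁻ s in Ioc 1 b, ENNReal.ofReal (b ^ k) * f (b ^ k * s) = ∫⁻ t in Ioi 0, f t := by
  have hb₀ : 0 < b := zero_lt_one.trans hb
  have hdisj : Pairwise (Function.onFun Disjoint fun k : ℤ ↦ Ioc (b ^ k) (b ^ (k + 1))) :=
    (zpow_right_mono₀ hb.le).pairwise_disjoint_on_Ioc_succ
  rw [← iUnion_Ioc_zpow hb, lintegral_iUnion (fun _ ↦ measurableSet_Ioc) hdisj]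
  refine tsum_congr fun k ↦ ?_
  rw [← setLIntegral_Ioc_mul_left (zpow_pos hb₀ k), mul_one, zpow_add_one₀ hb₀.ne']

lemma ae_summable_zpow_mul_norm {E : Type*} [NormedAddCommGroup E] {f : ℝ → E}
    (hf : IntegrableOn f (Ioi 0)) {b : ℝ} (hb : 1 < b) :
    ∀ᵐ s ∂volume.restrict (Ioc 1 b), Summable fun k : ℤ ↦ b ^ k * ‖f (b ^ k * s)‖ := by
  have hpos (k : ℤ) : 0 < b ^ k := zpow_pos (zero_lt_one.trans hb) k
  have hmeas (k : ℤ) : AEMeasurable (fun s ↦ ENNReal.ofReal (b ^ k) * ‖f (b ^ k * s)‖ₑ)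
      (volume.restrict (Ioc 1 b)) := by
    have hdilate : IntegrableOn (fun s ↦ f (b ^ k * s)) (Ioi 0) :=
      (integrableOn_Ioi_comp_mul_left_iff f 0 (hpos k)).2 (by rwa [mul_zero])
    have hsub : Ioc 1 b ⊆ Ioi 0 := fun s hs ↦ zero_lt_one.trans hs.1
    exact (hdilate.mono_set hsub).aestronglyMeasurable.enorm.const_mul _
  have hfin : ∫⁻ s in Ioc 1 b, ∑' k : ℤ, ENNReal.ofReal (b ^ k) * ‖f (b ^ k * s)‖ₑ ≠ ∞ := by
    rw [lintegral_tsum hmeas, tsum_setLIntegral_Ioc_zpow hb fun t ↦ ‖f t‖ₑ]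
    exact hf.2.ne
  filter_upwards [ae_lt_top' (AEMeasurable.tsum hmeas) hfin] with s hs
  refine (ENNReal.summable_toReal hs.ne).congr fun k ↦ ?_
  rw [ENNReal.toReal_mul, ENNReal.toReal_ofReal (hpos k).le, toReal_enorm]

/-! ### Weights of the `J`-method -/

/-- A weight `w` for which the discrete `J`-method takes values in `E₀ + E₁`: the `J`-functional
`J(2ᵏ, ·)` dominates `max 1 2ᵏ` times the norm of `E₀ + E₁`, so `w(2ᵏ) min(1, 2⁻ᵏ)` has to be
summable. Only the values at the dyadic points matter. -/
structure IsJWeight (w : ℝ → ℝ) : Prop where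
  pos : ∀ k : ℤ, 0 < w (2 ^ k)
  summable : Summable fun k : ℤ ↦ min 1 ((2 : ℝ) ^ k)⁻¹ * w (2 ^ k)

lemma IsJWeight.of_le {w v : ℝ → ℝ} (hv : IsJWeight v) (hpos : ∀ k : ℤ, 0 < w (2 ^ k))
    (hle : ∀ k : ℤ, w (2 ^ k) ≤ v (2 ^ k)) : IsJWeight w where
  pos := hpos
  summable := by
    have hmin (k : ℤ) : 0 ≤ min 1 ((2 : ℝ) ^ k)⁻¹ := by positivity
    exact hv.summable.of_nonneg_of_le (fun k ↦ mul_nonneg (hmin k) (hpos k).le)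
      fun k ↦ mul_le_mul_of_nonneg_left (hle k) (hmin k)

namespace IsClassB

variable {ρ : ℝ → ℝ} {s t : ℝ}

lemma apply_mul_le (hρ : IsClassB ρ) (hs : 0 < s) (ht : 0 < t) : ρ (s * t) ≤ rbar ρ s * ρ t :=
  (div_le_iff₀ (hρ.pos t ht)).1 (le_csSup (hρ.bdd s hs) ⟨t, ht, rfl⟩)

lemma le_rbar (hρ : IsClassB ρ) (hs : 0 < s) : ρ s ≤ rbar ρ s := by
  simpa [hρ.one] using hρ.apply_mul_le hs one_pos

lemma rbar_pos (hρ : IsClassB ρ) (hs : 0 < s) : 0 < rbar ρ s :=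
  (hρ.pos s hs).trans_le (hρ.le_rbar hs)

lemma rbar_mul_le (hρ : IsClassB ρ) (hs : 0 < s) (ht : 0 < t) :
    rbar ρ (s * t) ≤ rbar ρ s * rbar ρ t := by
  refine csSup_le ⟨_, 1, one_pos, rfl⟩ ?_
  rintro _ ⟨u, hu, rfl⟩
  rw [div_le_iff₀ (hρ.pos u hu)]
  calc ρ (s * t * u) = ρ (s * (t * u)) := by rw [mul_assoc]
    _ ≤ rbar ρ s * ρ (t * u) := hρ.apply_mul_le hs (mul_pos ht hu)
    _ ≤ rbar ρ s * (rbar ρ t * ρ u) :=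
      mul_le_mul_of_nonneg_left (hρ.apply_mul_le ht hu) (hρ.rbar_pos hs).le
    _ = rbar ρ s * rbar ρ t * ρ u := by rw [mul_assoc]

lemma inv_rbar_inv_le_rbar (hρ : IsClassB ρ) (hs : 0 < s) : (rbar ρ s⁻¹)⁻¹ ≤ rbar ρ s := by
  rw [inv_le_iff_one_le_mul₀ (hρ.rbar_pos (inv_pos.2 hs))]
  calc 1 = ρ (s * s⁻¹) := by rw [mul_inv_cancel₀ hs.ne', hρ.one]
    _ ≤ rbar ρ (s * s⁻¹) := hρ.le_rbar (by positivity)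
    _ ≤ rbar ρ s * rbar ρ s⁻¹ := hρ.rbar_mul_le hs (inv_pos.2 hs)

lemma min_mul_rbar_le (hρ : IsClassB ρ) (hs : 1 ≤ s) (ht : 0 < t) :
    min 1 t⁻¹ * rbar ρ t ≤
      s ^ 2 * rbar ρ s⁻¹ * (t * (min 1 (t * s)⁻¹ * rbar ρ (t * s) * (t * s)⁻¹)) := by
  have hs₀ : 0 < s := zero_lt_one.trans_le hs
  have hts : 0 < t * s := mul_pos ht hs₀
  have hmin : min 1 t⁻¹ ≤ s * min 1 (t * s)⁻¹ := by
    rw [mul_min_of_nonneg _ _ hs₀.le, mul_one]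
    exact min_le_min hs (by field_simp; exact le_rfl)
  have hrbar : rbar ρ t ≤ rbar ρ (t * s) * rbar ρ s⁻¹ := by
    simpa [mul_assoc, hs₀.ne'] using hρ.rbar_mul_le hts (inv_pos.2 hs₀)
  calc min 1 t⁻¹ * rbar ρ t ≤ s * min 1 (t * s)⁻¹ * (rbar ρ (t * s) * rbar ρ s⁻¹) :=
        mul_le_mul hmin hrbar (hρ.rbar_pos ht).le (by positivity)
    _ = s ^ 2 * rbar ρ s⁻¹ * (t * (min 1 (t * s)⁻¹ * rbar ρ (t * s) * (t * s)⁻¹)) := by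
        field_simp

end IsClassB

namespace IsClassBpm

variable {ρ : ℝ → ℝ}

-- The integral is sampled at the points `2ᵏ s` for one `s ∈ (1, 2]` at which the samples are
-- summable; submultiplicativity then moves the samples to `2ᵏ` at the cost of `ρ̄(s⁻¹)`. This
-- avoids having to bound `ρ̄` on compact intervals.
lemma isJWeight_rbar (hρ : IsClassBpm ρ) : IsJWeight (rbar ρ) where
  pos k := hρ.rbar_pos (by positivity)
  summable := by
    have hne : (ae (volume.restrict (Ioc (1 : ℝ) 2))).NeBot := by
      rw [ae_neBot, Ne, Measure.restrict_eq_zero]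
      simp
    obtain ⟨s, hsum, hs⟩ := ((ae_summable_zpow_mul_norm hρ.integ one_lt_two).and
      (ae_restrict_mem measurableSet_Ioc)).exists
    refine (hsum.mul_left (s ^ 2 * rbar ρ s⁻¹)).of_nonneg_of_le (fun k ↦ ?_) fun k ↦ ?_
    · exact mul_nonneg (by positivity) (hρ.rbar_pos (by positivity)).le
    · have hs₀ : 0 < s := zero_lt_one.trans hs.1
      have hrbar : 0 < rbar ρ (2 ^ k * s) := hρ.rbar_pos (by positivity)
      rw [Real.norm_of_nonneg (by positivity)]
      exact hρ.min_mul_rbar_le hs.1.le (by positivity)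

lemma isJWeight (hρ : IsClassBpm ρ) : IsJWeight ρ :=
  hρ.isJWeight_rbar.of_le (fun _ ↦ hρ.pos _ (by positivity)) fun _ ↦ hρ.le_rbar (by positivity)

lemma isJWeight_inv_rbar_inv (hρ : IsClassBpm ρ) : IsJWeight fun t ↦ (rbar ρ t⁻¹)⁻¹ :=
  hρ.isJWeight_rbar.of_le (fun _ ↦ inv_pos.2 (hρ.rbar_pos (by positivity)))
    fun _ ↦ hρ.inv_rbar_inv_le_rbar (by positivity)

end IsClassBpm

/-! ### The sum space and `J`-representations -/

lemma le_eLq {q : ℝ≥0∞} (hq : q ≠ 0) (a : ℤ → ℝ≥0∞) (n : ℤ) : a n ≤ eLq q a := by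
  unfold eLq
  split_ifs with hq_top
  · exact le_iSup a n
  · rw [one_div, ENNReal.le_rpow_inv_iff (ENNReal.toReal_pos hq hq_top)]
    exact ENNReal.le_tsum n

lemma enorm_le_ofReal {E : Type*} [SeminormedAddCommGroup E] {a : E} {r : ℝ} (h : ‖a‖ ≤ r) :
    ‖a‖ₑ ≤ ENNReal.ofReal r := by
  rw [← ofReal_norm]
  exact ENNReal.ofReal_le_ofReal h

section Couple

variable {E₀ E₁ V : Type*} [NormedAddCommGroup E₀] [NormedSpace ℝ E₀]
  [NormedAddCommGroup E₁] [NormedSpace ℝ E₁] [AddCommGroup V] [Module ℝ V]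

lemma enormOf_map_le (i : E₀ →ₗ[ℝ] V) (a : E₀) : enormOf i (i a) ≤ ‖a‖ₑ :=
  iInf_le_of_le a (iInf_le _ rfl)

lemma enormOf_map_inv_smul_le_one (i : E₀ →ₗ[ℝ] V) {a : E₀} {K : ℝ≥0} (ha : ‖a‖₊ ≤ K) :
    enormOf i (i ((K + 1 : ℝ)⁻¹ • a)) ≤ 1 := by
  refine (enormOf_map_le i _).trans (ENNReal.ofReal_one ▸ enorm_le_ofReal ?_)
  rw [norm_smul, Real.norm_of_nonneg (by positivity), inv_mul_le_iff₀ (by positivity), mul_one]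
  exact (NNReal.coe_le_coe.2 ha).trans (le_add_of_nonneg_right zero_le_one)

variable (i₀ : E₀ →ₗ[ℝ] V) (i₁ : E₁ →ₗ[ℝ] V)

lemma esumNorm_eq_iInf (x : V) :
    esumNorm i₀ i₁ x = ⨅ (a : E₀) (b : E₁) (_ : x = i₀ a + i₁ b), (‖a‖ₑ + ‖b‖ₑ) := by
  simp only [esumNorm, eKfun, one_mul, ENNReal.ofReal_add (norm_nonneg _) (norm_nonneg _),
    ofReal_norm]

lemma esumNorm_map_add_map_le (a : E₀) (b : E₁) :
    esumNorm i₀ i₁ (i₀ a + i₁ b) ≤ ‖a‖ₑ + ‖b‖ₑ := by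
  rw [esumNorm_eq_iInf]
  exact iInf_le_of_le a (iInf_le_of_le b (iInf_le _ rfl))

lemma esumNorm_map_left_le (a : E₀) : esumNorm i₀ i₁ (i₀ a) ≤ ‖a‖ₑ := by
  simpa using esumNorm_map_add_map_le i₀ i₁ a 0

lemma esumNorm_map_right_le (b : E₁) : esumNorm i₀ i₁ (i₁ b) ≤ ‖b‖ₑ := by
  simpa using esumNorm_map_add_map_le i₀ i₁ 0 b

lemma esumNorm_zero : esumNorm i₀ i₁ 0 = 0 := by
  simpa using esumNorm_map_left_le i₀ i₁ 0

lemma esumNorm_add_le (x y : V) :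
    esumNorm i₀ i₁ (x + y) ≤ esumNorm i₀ i₁ x + esumNorm i₀ i₁ y := by
  rw [esumNorm_eq_iInf i₀ i₁ x, esumNorm_eq_iInf i₀ i₁ y]
  simp only [ENNReal.iInf_add, ENNReal.add_iInf, le_iInf_iff]
  rintro a' b' rfl a b rfl
  calc esumNorm i₀ i₁ (i₀ a + i₁ b + (i₀ a' + i₁ b'))
      = esumNorm i₀ i₁ (i₀ (a + a') + i₁ (b + b')) := by
        rw [map_add, map_add, add_add_add_comm]
    _ ≤ ‖a + a'‖ₑ + ‖b + b'‖ₑ := esumNorm_map_add_map_le ..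
    _ ≤ (‖a‖ₑ + ‖a'‖ₑ) + (‖b‖ₑ + ‖b'‖ₑ) := add_le_add (enorm_add_le _ _) (enorm_add_le _ _)
    _ = ‖a‖ₑ + ‖b‖ₑ + (‖a'‖ₑ + ‖b'‖ₑ) := add_add_add_comm ..

lemma esumNorm_sum_le {ι : Type*} (s : Finset ι) (u : ι → V) :
    esumNorm i₀ i₁ (∑ k ∈ s, u k) ≤ ∑ k ∈ s, esumNorm i₀ i₁ (u k) :=
  Finset.le_sum_of_subadditive _ (esumNorm_zero i₀ i₁).le (esumNorm_add_le i₀ i₁) s u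

variable {i₀ i₁} {x : V} {a : ℤ → E₀} {b : ℤ → E₁}

lemma IsJRep.esumNorm_sub_sum_le (h : IsJRep i₀ i₁ x a b) (s : Finset ℤ) :
    esumNorm i₀ i₁ (x - ∑ k ∈ s, i₀ (a k)) ≤ ∑' k : {k // k ∉ s}, esumNorm i₀ i₁ (i₀ (a k)) := by
  refine ENNReal.le_of_forall_pos_le_add fun ε hε _ ↦ ?_
  obtain ⟨t, ht⟩ := h.2 ε hε
  have hrem : esumNorm i₀ i₁ (x - ∑ k ∈ s ∪ t, i₀ (a k)) ≤ ε := by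
    simpa using (ht (s ∪ t) Finset.subset_union_right).le
  have hmid : ∑ k ∈ (s ∪ t) \ s, esumNorm i₀ i₁ (i₀ (a k)) ≤
      ∑' k : {k // k ∉ s}, esumNorm i₀ i₁ (i₀ (a k)) := by
    rw [← Finset.sum_subtype_of_mem (p := (· ∉ s)) _ fun k hk ↦ (Finset.mem_sdiff.1 hk).2]
    exact ENNReal.sum_le_tsum _
  calc esumNorm i₀ i₁ (x - ∑ k ∈ s, i₀ (a k))
      = esumNorm i₀ i₁ (∑ k ∈ (s ∪ t) \ s, i₀ (a k) + (x - ∑ k ∈ s ∪ t, i₀ (a k))) := by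
        rw [← Finset.sum_sdiff (Finset.subset_union_left (s₁ := s) (s₂ := t))]
        abel_nf
    _ ≤ esumNorm i₀ i₁ (∑ k ∈ (s ∪ t) \ s, i₀ (a k)) +
          esumNorm i₀ i₁ (x - ∑ k ∈ s ∪ t, i₀ (a k)) := esumNorm_add_le ..
    _ ≤ _ := add_le_add ((esumNorm_sum_le ..).trans hmid) hrem

lemma exists_isJRep_of_eJNorm_lt {w : ℝ → ℝ} (hw : ∀ k : ℤ, 0 < w (2 ^ k)) {q : ℝ≥0∞}
    (hq : q ≠ 0) {C : ℝ} (hx : eJNorm i₀ i₁ w q x < ENNReal.ofReal C) :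
    ∃ a b, IsJRep i₀ i₁ x a b ∧ ∀ k : ℤ, max ‖a k‖ (2 ^ k * ‖b k‖) ≤ C * w (2 ^ k) := by
  simp only [eJNorm, iInf_lt_iff] at hx
  obtain ⟨a, b, hab, hlt⟩ := hx
  refine ⟨a, b, hab, fun k ↦ ?_⟩
  have hterm := (le_eLq hq _ k).trans_lt hlt
  rw [← div_le_iff₀ (hw k)]
  exact (ENNReal.lt_ofReal_iff_toReal_lt ENNReal.ofReal_ne_top |>.1 hterm |>.le).trans' (by
    rw [ENNReal.toReal_ofReal']
    exact le_max_left _ _)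

lemma esumNorm_map_le_of_max_le {a : E₀} {b : E₁} (hab : i₀ a = i₁ b) {t c : ℝ} (ht : 0 < t)
    (h : max ‖a‖ (t * ‖b‖) ≤ c) : esumNorm i₀ i₁ (i₀ a) ≤ ENNReal.ofReal (min 1 t⁻¹ * c) := by
  obtain ⟨ha, htb⟩ := max_le_iff.1 h
  have hb : ‖b‖ ≤ t⁻¹ * c := by rwa [← div_eq_inv_mul, le_div_iff₀' ht]
  rw [min_mul_of_nonneg _ _ ((norm_nonneg a).trans ha), one_mul, ENNReal.ofReal_min]
  refine le_min ?_ ?_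
  · exact (esumNorm_map_left_le i₀ i₁ a).trans (enorm_le_ofReal ha)
  · rw [hab]
    exact (esumNorm_map_right_le i₀ i₁ b).trans (enorm_le_ofReal hb)

/-- The unit ball of `N` is, up to arbitrarily small errors in `E₀ + E₁`, contained in a bounded
subset of `E₀`. Together with boundedness on the sums, this is all that the compactness argument
needs to know about an interpolation space. -/
def IsUnitBallApproximable (i₀ : E₀ →ₗ[ℝ] V) (i₁ : E₁ →ₗ[ℝ] V) (N : V → ℝ≥0∞) : Prop :=
  ∀ η : ℝ≥0, 0 < η → ∃ K : ℝ≥0, ∀ x, N x ≤ 1 →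
    ∃ a : E₀, ‖a‖₊ ≤ K ∧ esumNorm i₀ i₁ (x - i₀ a) ≤ η

lemma IsUnitBallApproximable.exists_esumNorm_le {N : V → ℝ≥0∞}
    (h : IsUnitBallApproximable i₀ i₁ N) :
    ∃ B : ℝ≥0, ∀ x, N x ≤ 1 → esumNorm i₀ i₁ x ≤ B := by
  obtain ⟨K, hK⟩ := h 1 one_pos
  refine ⟨1 + K, fun x hx ↦ ?_⟩
  obtain ⟨a, ha, hxa⟩ := hK x hx
  calc esumNorm i₀ i₁ x = esumNorm i₀ i₁ (x - i₀ a + i₀ a) := by rw [sub_add_cancel]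
    _ ≤ esumNorm i₀ i₁ (x - i₀ a) + esumNorm i₀ i₁ (i₀ a) := esumNorm_add_le ..
    _ ≤ (1 : ℝ≥0) + K := add_le_add hxa
      ((esumNorm_map_left_le ..).trans (ENNReal.coe_le_coe.2 ha))

lemma IsJWeight.isUnitBallApproximable {w : ℝ → ℝ} (hw : IsJWeight w) {q : ℝ≥0∞} (hq : q ≠ 0) :
    IsUnitBallApproximable i₀ i₁ (eJNorm i₀ i₁ w q) := by
  intro η hη
  let c (k : ℤ) : ℝ := min 1 ((2 : ℝ) ^ k)⁻¹ * (2 * w (2 ^ k))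
  have hc : Summable c := (hw.summable.mul_left 2).congr fun k ↦ mul_left_comm ..
  obtain ⟨s, hs⟩ : ∃ s : Finset ℤ, ∑' k : {k // k ∉ s}, ENNReal.ofReal (c k) < η :=
    ((ENNReal.tendsto_tsum_compl_atTop_zero hc.tsum_ofReal_ne_top).eventually_lt_const
      (ENNReal.coe_pos.2 hη)).exists
  refine ⟨(∑ k ∈ s, 2 * w (2 ^ k)).toNNReal, fun x hx ↦ ?_⟩
  obtain ⟨a, b, hab, hmax⟩ := exists_isJRep_of_eJNorm_lt (C := 2) hw.pos hq
    (hx.trans_lt (by norm_num))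
  have hsum : ‖∑ k ∈ s, a k‖ ≤ ∑ k ∈ s, 2 * w (2 ^ k) :=
    norm_sum_le_of_le s fun k _ ↦ (le_max_left _ _).trans (hmax k)
  refine ⟨∑ k ∈ s, a k, NNReal.le_toNNReal_of_coe_le hsum, ?_⟩
  calc esumNorm i₀ i₁ (x - i₀ (∑ k ∈ s, a k))
      = esumNorm i₀ i₁ (x - ∑ k ∈ s, i₀ (a k)) := by rw [map_sum]
    _ ≤ ∑' k : {k // k ∉ s}, esumNorm i₀ i₁ (i₀ (a k)) := hab.esumNorm_sub_sum_le s
    _ ≤ ∑' k : {k // k ∉ s}, ENNReal.ofReal (c k) := ENNReal.tsum_le_tsum fun k ↦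
      esumNorm_map_le_of_max_le (hab.1 k) (by positivity) (hmax k)
    _ ≤ η := hs.le

end Couple

/-! ### Compactness of bilinear operators -/

section Bilinear

variable {E₀ E₁ F₀ F₁ VE VF G : Type*}
  [NormedAddCommGroup E₀] [NormedSpace ℝ E₀] [NormedAddCommGroup E₁] [NormedSpace ℝ E₁]
  [NormedAddCommGroup F₀] [NormedSpace ℝ F₀] [NormedAddCommGroup F₁] [NormedSpace ℝ F₁]
  [AddCommGroup VE] [Module ℝ VE] [AddCommGroup VF] [Module ℝ VF]
  [SeminormedAddCommGroup G] [NormedSpace ℝ G]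
  {iE₀ : E₀ →ₗ[ℝ] VE} {iE₁ : E₁ →ₗ[ℝ] VE} {iF₀ : F₀ →ₗ[ℝ] VF} {iF₁ : F₁ →ₗ[ℝ] VF}
  {T : VE →ₗ[ℝ] VF →ₗ[ℝ] G}

lemma eBilCompact.exists_finset_of_norm_le
    (h : eBilCompact (enormOf iE₀) (enormOf iF₀) (fun z : G ↦ (‖z‖₊ : ℝ≥0∞)) fun x y ↦ T x y)
    (K L : ℝ≥0) {ε : ℝ} (hε : 0 < ε) :
    ∃ D : Finset G, ∀ a b, ‖a‖₊ ≤ K → ‖b‖₊ ≤ L → ∃ d ∈ D, ‖T (iE₀ a) (iF₀ b) - d‖ < ε := by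
  classical
  set S : ℝ := (K + 1) * (L + 1) with hS
  have hS₀ : 0 < S := by positivity
  obtain ⟨D, hD⟩ := h (ε / S) (by positivity)
  refine ⟨D.image (S • ·), fun a b ha hb ↦ ?_⟩
  obtain ⟨d, hd, hlt⟩ := hD _ _ (enormOf_map_inv_smul_le_one iE₀ ha)
    (enormOf_map_inv_smul_le_one iF₀ hb)
  refine ⟨S • d, Finset.mem_image_of_mem _ hd, ?_⟩
  have hlt' : ‖T (iE₀ ((K + 1 : ℝ)⁻¹ • a)) (iF₀ ((L + 1 : ℝ)⁻¹ • b)) - d‖ < ε / S := by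
    rwa [← ENNReal.ofReal_lt_ofReal_iff (by positivity), ofReal_norm]
  have hscale : S * ((L + 1 : ℝ)⁻¹ * (K + 1 : ℝ)⁻¹) = 1 := by
    rw [hS]
    field_simp
  calc ‖T (iE₀ a) (iF₀ b) - S • d‖
      = ‖S • (T (iE₀ ((K + 1 : ℝ)⁻¹ • a)) (iF₀ ((L + 1 : ℝ)⁻¹ • b)) - d)‖ := by
        simp only [map_smul, LinearMap.smul_apply, smul_sub, smul_smul, hscale, one_smul]
    _ = S * ‖T (iE₀ ((K + 1 : ℝ)⁻¹ • a)) (iF₀ ((L + 1 : ℝ)⁻¹ • b)) - d‖ := by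
        rw [norm_smul, Real.norm_of_nonneg hS₀.le]
    _ < ε := (lt_div_iff₀' hS₀).1 hlt'

theorem eBilCompact_of_isUnitBallApproximable {NE : VE → ℝ≥0∞} {NF : VF → ℝ≥0∞}
    (hNE : IsUnitBallApproximable iE₀ iE₁ NE) (hNF : IsUnitBallApproximable iF₀ iF₁ NF)
    (hbdd : eBilBdd (esumNorm iE₀ iE₁) (esumNorm iF₀ iF₁) (fun z : G ↦ (‖z‖₊ : ℝ≥0∞))
      fun x y ↦ T x y)
    (hcpt : eBilCompact (enormOf iE₀) (enormOf iF₀) (fun z : G ↦ (‖z‖₊ : ℝ≥0∞)) fun x y ↦ T x y) :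
    eBilCompact NE NF (fun z : G ↦ (‖z‖₊ : ℝ≥0∞)) fun x y ↦ T x y := by
  intro ε hε
  lift ε to ℝ≥0 using hε.le
  have hε₃ : 0 < ε / 3 := div_pos hε three_pos
  obtain ⟨M, hM⟩ := hbdd
  have hT {x y} {r s : ℝ≥0} (hx : esumNorm iE₀ iE₁ x ≤ r) (hy : esumNorm iF₀ iF₁ y ≤ s) :
      ‖T x y‖₊ ≤ M * r * s := by
    have hbound : (‖T x y‖₊ : ℝ≥0∞) ≤ M * r * s :=
      (hM x y).trans (mul_le_mul' (mul_le_mul_right hx _) hy)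
    exact_mod_cast hbound
  obtain ⟨B, hB⟩ := hNF.exists_esumNorm_le
  obtain ⟨η, hη, hη_lt⟩ := exists_pos_mul_lt hε₃ (M * B)
  obtain ⟨K, hK⟩ := hNE η hη
  obtain ⟨θ, hθ, hθ_lt⟩ := exists_pos_mul_lt hε₃ (M * K)
  obtain ⟨L, hL⟩ := hNF θ hθ
  obtain ⟨D, hD⟩ := hcpt.exists_finset_of_norm_le K L hε₃
  refine ⟨D, fun x y hx hy ↦ ?_⟩
  obtain ⟨a, haK, hxa⟩ := hK x hx
  obtain ⟨b, hbL, hyb⟩ := hL y hy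
  obtain ⟨d, hdD, hd⟩ := hD a b haK hbL
  have ha : esumNorm iE₀ iE₁ (iE₀ a) ≤ K :=
    (esumNorm_map_left_le ..).trans (ENNReal.coe_le_coe.2 haK)
  refine ⟨d, hdD, ?_⟩
  rw [ENNReal.ofReal_coe_nnreal, ENNReal.coe_lt_coe]
  calc ‖T x y - d‖₊
      = ‖T (x - iE₀ a) y + T (iE₀ a) (y - iF₀ b) + (T (iE₀ a) (iF₀ b) - d)‖₊ := by
        simp only [map_sub, LinearMap.sub_apply]
        abel_nf
    _ ≤ ‖T (x - iE₀ a) y‖₊ + ‖T (iE₀ a) (y - iF₀ b)‖₊ + ‖T (iE₀ a) (iF₀ b) - d‖₊ :=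
        norm_add₃_le
    _ < ε / 3 + ε / 3 + ε / 3 := by
        refine add_lt_add (add_lt_add ?_ ?_) hd
        · exact (hT hxa (hB y hy)).trans_lt (by rwa [mul_right_comm])
        · exact (hT ha hyb).trans_lt hθ_lt
    _ = ε := add_thirds ε

theorem statement3_general (γ ρ : ℝ → ℝ) (hγ : IsJWeight γ) (hρ : IsJWeight ρ)
    (hbdd : eBilBdd (esumNorm iE₀ iE₁) (esumNorm iF₀ iF₁) (fun z : G ↦ (‖z‖₊ : ℝ≥0∞))
      fun x y ↦ T x y)
    (hcpt : eBilCompact (enormOf iE₀) (enormOf iF₀) (fun z : G ↦ (‖z‖₊ : ℝ≥0∞)) fun x y ↦ T x y)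
    {p q : ℝ≥0∞} (hp : p ≠ 0) (hq : q ≠ 0) :
    eBilCompact (eJNorm iE₀ iE₁ γ p) (eJNorm iF₀ iF₁ ρ q) (fun z : G ↦ (‖z‖₊ : ℝ≥0∞))
      fun x y ↦ T x y :=
  eBilCompact_of_isUnitBallApproximable (hγ.isUnitBallApproximable hp)
    (hρ.isUnitBallApproximable hq) hbdd hcpt

end Bilinear

/-- Lions–Peetre type with approximation hypothesis: if the Banach
couples `(E₀,E₁)` and `(F₀,F₁)` satisfy (AP), `ρ ∈ ℬ^{+-}`, `γ(t) = 1/ρ̄(t⁻¹)`, and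
`T : (E₀+E₁) × (F₀+F₁) → G` is bounded bilinear and compact from `E₀ × F₀` into `G`,
then `T` is compact from `(E₀,E₁)_{γ,p;J} × (F₀,F₁)_{ρ,q;J}` into `G` for all
`1 ≤ p, q ≤ ∞`. -/
theorem statement3 {E₀ E₁ F₀ F₁ VE VF G : Type*}
    [NormedAddCommGroup E₀] [NormedSpace ℝ E₀] [NormedAddCommGroup E₁] [NormedSpace ℝ E₁]
    [NormedAddCommGroup F₀] [NormedSpace ℝ F₀] [NormedAddCommGroup F₁] [NormedSpace ℝ F₁]
    [AddCommGroup VE] [Module ℝ VE] [TopologicalSpace VE]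
    [AddCommGroup VF] [Module ℝ VF] [TopologicalSpace VF]
    [NormedAddCommGroup G] [NormedSpace ℝ G] [CompleteSpace G]
    (iE₀ : E₀ →ₗ[ℝ] VE) (iE₁ : E₁ →ₗ[ℝ] VE) (hE : IsBanachCouple iE₀ iE₁)
    (iF₀ : F₀ →ₗ[ℝ] VF) (iF₁ : F₁ →ₗ[ℝ] VF) (hF : IsBanachCouple iF₀ iF₁)
    (hAPE : SatisfiesAP (enormOf iE₀) (enormOf iE₁))
    (hAPF : SatisfiesAP (enormOf iF₀) (enormOf iF₁))
    (ρ : ℝ → ℝ) (hρ : IsClassBpm ρ)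
    (T : VE →ₗ[ℝ] VF →ₗ[ℝ] G)
    (hbdd : eBilBdd (esumNorm iE₀ iE₁) (esumNorm iF₀ iF₁) (fun z : G => (‖z‖₊ : ℝ≥0∞))
      (fun x y => T x y))
    (hcpt : eBilCompact (enormOf iE₀) (enormOf iF₀) (fun z : G => (‖z‖₊ : ℝ≥0∞))
      (fun x y => T x y))
    (p q : ℝ≥0∞) (hp : 1 ≤ p) (hq : 1 ≤ q) :
    eBilCompact (eJNorm iE₀ iE₁ (fun t => (rbar ρ t⁻¹)⁻¹) p) (eJNorm iF₀ iF₁ ρ q)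
      (fun z : G => (‖z‖₊ : ℝ≥0∞)) (fun x y => T x y) := by
  exact statement3_general _ ρ hρ.isJWeight_inv_rbar_inv hρ.isJWeight hbdd hcpt
    (zero_lt_one.trans_le hp).ne' (zero_lt_one.trans_le hq).ne'
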